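/- arXiv:0906.1632 — 2 statements merged into one kernel-verified Lean document; each statement's English description precedes it below -/
import Mathlib

section
/- The indifference premium H_t maps L^∞_T into L^∞_t with H_t(0) = 0 a.s., and it satisfies: (i) monotonicity: H_t(X) ≥ H_t(Y) a.s. whenever X, Y ∈ L^∞_T with X ≥ Y a.s.; (ii) convexity: H_t(aX + (1−a)Y) ≤ a H_t(X) + (1−a) H_t(Y) a.s. for X, Y ∈ L^∞_T and a ∈ (0,1); (iii) risk loading: H_t(Z) ≥ E[Z | 𝓕_t] a.s. for all Z ∈ L^∞_T; (iv) translation invariance: H_t(Z + C) = H_t(Z) + C a.s. for Z ∈ L^∞_T and C ∈ L^∞_t. -/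
open MeasureTheory Filter

variable {Ω : Type*}

/-- `X ∈ L^∞(m)`: `m`-measurable and (essentially) bounded. -/
def MeasBdd (m : MeasurableSpace Ω) (X : Ω → ℝ) : Prop :=
  Measurable[m] X ∧ ∃ C : ℝ, ∀ ω, |X ω| ≤ C

/-- `u` is a utility function (strictly increasing, strictly concave, `C¹`) with
derivative `u'` satisfying `u 0 = 0`, `u' 0 = 1`, `u'(+∞) = 0`, `u'(-∞) = +∞`. -/
structure IsUtility (u u' : ℝ → ℝ) : Prop where
  strictMono : StrictMono u
  strictConcave : StrictConcaveOn ℝ Set.univ u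
  hasDeriv : ∀ x, HasDerivAt u (u' x) x
  derivCont : Continuous u'
  zero : u 0 = 0
  deriv_zero : u' 0 = 1
  deriv_top : Tendsto u' atTop (nhds 0)
  deriv_bot : Tendsto u' atBot atTop

/-- A diversification of `Z` at time `t`: an adapted family `(X i s)`,
`i = 1,…,n`, `s = t,…,T`, of essentially bounded random variables summing to `Z`. -/
def IsDiv {m0 : MeasurableSpace Ω} (P : Measure Ω) (ℱ : Filtration ℕ m0)
    (n t T : ℕ) (Z : Ω → ℝ) (X : ℕ → ℕ → Ω → ℝ) : Prop :=
  (∀ i ∈ Finset.Icc 1 n, ∀ s ∈ Finset.Icc t T, MeasBdd (ℱ s) (X i s)) ∧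
  ∀ᵐ ω ∂P, (∑ i ∈ Finset.Icc 1 n, ∑ s ∈ Finset.Icc t T, X i s ω) = Z ω

/-- The total conditional expected utility `∑_{i,s} E[u_{i,s}(X_{i,s}) | 𝓕_t]`. -/
noncomputable def utilSum {m0 : MeasurableSpace Ω} (P : Measure Ω) (ℱ : Filtration ℕ m0)
    (u : ℕ → ℕ → ℝ → ℝ) (n t T : ℕ) (X : ℕ → ℕ → Ω → ℝ) : Ω → ℝ :=
  fun ω => ∑ i ∈ Finset.Icc 1 n, ∑ s ∈ Finset.Icc t T,
    (P[fun ω' => u i s (X i s ω') | ℱ t]) ω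

/-- `g` is an essential supremum of the family `S` of random variables under `P`. -/
def IsEssSupOf {m0 : MeasurableSpace Ω} (P : Measure Ω) (S : Set (Ω → ℝ)) (g : Ω → ℝ) : Prop :=
  (∀ f ∈ S, f ≤ᵐ[P] g) ∧ ∀ h : Ω → ℝ, (∀ f ∈ S, f ≤ᵐ[P] h) → g ≤ᵐ[P] h

/-- `g` is an essential infimum of the family `S` of random variables under `P`. -/
def IsEssInfOf {m0 : MeasurableSpace Ω} (P : Measure Ω) (S : Set (Ω → ℝ)) (g : Ω → ℝ) : Prop :=
  (∀ f ∈ S, g ≤ᵐ[P] f) ∧ ∀ h : Ω → ℝ, (∀ f ∈ S, h ≤ᵐ[P] f) → h ≤ᵐ[P] g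

theorem ipp_ule {u u' : ℝ → ℝ} (h : IsUtility u u') (x : ℝ) : u x ≤ x := by
  have hc : ConcaveOn ℝ Set.univ u := h.strictConcave.concaveOn
  have hd : HasDerivAt u 1 0 := by
    have := h.hasDeriv 0
    rwa [h.deriv_zero] at this
  rcases lt_trichotomy x 0 with hx | hx | hx
  · have := hc.le_slope_of_hasDerivAt (Set.mem_univ x) (Set.mem_univ 0) hx hd
    rw [slope_def_field, h.zero, le_div_iff₀ (by linarith)] at this
    linarith
  · rw [hx, h.zero]
  · have := hc.slope_le_of_hasDerivAt (Set.mem_univ 0) (Set.mem_univ x) hx hd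
    rw [slope_def_field, h.zero, div_le_iff₀ (by linarith)] at this
    linarith

theorem ipp_int {m m0 : MeasurableSpace Ω} (P : Measure Ω) [IsProbabilityMeasure P]
    (hm : m ≤ m0) {X : Ω → ℝ} (hX : MeasBdd m X) : Integrable X P := by
  obtain ⟨h1, C, hC⟩ := hX
  exact Integrable.of_bound (h1.mono hm le_rfl).aestronglyMeasurable C
    (Eventually.of_forall fun ω => by simpa using hC ω)

theorem ipp_comp {m : MeasurableSpace Ω} {u u' : ℝ → ℝ} (h : IsUtility u u')
    {X : Ω → ℝ} (hX : MeasBdd m X) : MeasBdd m (fun ω => u (X ω)) := by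
  obtain ⟨h1, C, hC⟩ := hX
  refine ⟨h.strictMono.monotone.measurable.comp h1, max |u (-C)| |u C|, fun ω => ?_⟩
  have := abs_le.1 (hC ω)
  exact abs_le_max_abs_abs (h.strictMono.monotone this.1) (h.strictMono.monotone this.2)

theorem MeasBdd.ipp_add {m : MeasurableSpace Ω} {X Y : Ω → ℝ} (hX : MeasBdd m X)
    (hY : MeasBdd m Y) : MeasBdd m (fun ω => X ω + Y ω) := by
  obtain ⟨h1, C, hC⟩ := hX
  obtain ⟨h2, D, hD⟩ := hY
  exact ⟨h1.add h2, C + D, fun ω => (abs_add_le _ _).trans (add_le_add (hC ω) (hD ω))⟩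

theorem MeasBdd.ipp_smul {m : MeasurableSpace Ω} {X : Ω → ℝ} (a : ℝ) (hX : MeasBdd m X) :
    MeasBdd m (fun ω => a * X ω) := by
  obtain ⟨h1, C, hC⟩ := hX
  refine ⟨h1.const_mul a, |a| * C, fun ω => ?_⟩
  rw [abs_mul]
  exact mul_le_mul_of_nonneg_left (hC ω) (abs_nonneg a)

theorem MeasBdd.ipp_sub {m : MeasurableSpace Ω} {X Y : Ω → ℝ} (hX : MeasBdd m X)
    (hY : MeasBdd m Y) : MeasBdd m (fun ω => X ω - Y ω) := by
  have := hX.ipp_add (hY.ipp_smul (-1))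
  simpa [sub_eq_add_neg] using this

theorem MeasBdd.ipp_mono {m m' : MeasurableSpace Ω} (h : m ≤ m') {X : Ω → ℝ}
    (hX : MeasBdd m X) : MeasBdd m' X := ⟨hX.1.mono h le_rfl, hX.2⟩

theorem ipp_const (m : MeasurableSpace Ω) (c : ℝ) : MeasBdd m (fun _ : Ω => c) :=
  ⟨measurable_const, |c|, fun _ => le_rfl⟩

theorem ipp_sum_le {m0 : MeasurableSpace Ω} (P : Measure Ω) (A B : Finset ℕ)
    (f g : ℕ → ℕ → Ω → ℝ) (h : ∀ i ∈ A, ∀ s ∈ B, f i s ≤ᵐ[P] g i s) :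
    ∀ᵐ ω ∂P, ∑ i ∈ A, ∑ s ∈ B, f i s ω ≤ ∑ i ∈ A, ∑ s ∈ B, g i s ω := by
  have : ∀ᵐ ω ∂P, ∀ i ∈ A, ∀ s ∈ B, f i s ω ≤ g i s ω := by
    refine (ae_ball_iff A.countable_toSet).2 fun i hi => ?_
    exact (ae_ball_iff B.countable_toSet).2 fun s hs => h i hi s hs
  filter_upwards [this] with ω hω
  exact Finset.sum_le_sum fun i hi => Finset.sum_le_sum fun s hs => hω i hi s hs

/-- Essential infimum of a bounded family is measurable. -/
theorem ipp_essInf_meas {m m0 : MeasurableSpace Ω} (P : Measure Ω) [IsProbabilityMeasure P]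
    (hm : m ≤ m0) (S : Set (Ω → ℝ)) (hS : ∀ K ∈ S, Measurable[m] K) (C : ℝ) (hC : 0 ≤ C)
    (hCS : (fun _ => C) ∈ S) (hlow : ∀ K ∈ S, (fun _ => -C) ≤ᵐ[P] K) (g : Ω → ℝ)
    (hg : IsEssInfOf P S g) : ∃ V : Ω → ℝ, MeasBdd m V ∧ g =ᵐ[P] V := by
  let φ : (Ω → ℝ) → Ω → ℝ := fun K ω => max (-C) (min C (K ω))
  have hφ1 : ∀ K ω, -C ≤ φ K ω := fun K ω => le_max_left _ _
  have hφ2 : ∀ K ω, φ K ω ≤ C := fun K ω => max_le (by linarith) (min_le_left _ _)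
  have hbdd : ∀ (K : ℕ → S) ω, BddBelow (Set.range fun n => φ (K n).1 ω) :=
    fun K ω => ⟨-C, by rintro _ ⟨n, rfl⟩; exact hφ1 _ _⟩
  let G : (ℕ → S) → Ω → ℝ := fun K ω => ⨅ n, φ (K n).1 ω
  have hG1 : ∀ K ω, -C ≤ G K ω := fun K ω => le_ciInf fun n => hφ1 _ _
  have hG2 : ∀ K ω, G K ω ≤ C := fun K ω => (ciInf_le (hbdd K ω) 0).trans (hφ2 _ _)
  have hGm : ∀ K, MeasBdd m (G K) := fun K =>
    ⟨Measurable.iInf fun n => measurable_const.max (measurable_const.min (hS _ (K n).2)), C,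
      fun ω => abs_le.2 ⟨hG1 K ω, hG2 K ω⟩⟩
  have hGi : ∀ K, Integrable (G K) P := fun K => ipp_int P hm (hGm K)
  have hJ1 : ∀ K, -C ≤ ∫ ω, G K ω ∂P := fun K => by
    have := integral_mono (integrable_const (-C)) (hGi K) (fun ω => hG1 K ω)
    simpa using this
  have hBJ : BddBelow (Set.range fun K => ∫ ω, G K ω ∂P) :=
    ⟨-C, by rintro _ ⟨K, rfl⟩; exact hJ1 K⟩
  haveI : Nonempty (ℕ → S) := ⟨fun _ => ⟨_, hCS⟩⟩
  have hex : ∀ k : ℕ, ∃ K : ℕ → S,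
      ∫ ω, G K ω ∂P < (⨅ K, ∫ ω, G K ω ∂P) + 1 / ((k : ℝ) + 1) := fun k =>
    exists_lt_of_ciInf_lt (by
      have : (0 : ℝ) < 1 / ((k : ℝ) + 1) := by positivity
      linarith)
  choose Ks hKs using hex
  let K : ℕ → S := fun j => Ks j.unpair.1 j.unpair.2
  have hKle : ∀ k ω, G K ω ≤ G (Ks k) ω := fun k ω => le_ciInf fun j => by
    have := ciInf_le (hbdd K ω) (Nat.pair k j)
    simpa [K] using this
  have hKc : ∫ ω, G K ω ∂P ≤ ⨅ K, ∫ ω, G K ω ∂P := by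
    have ht : Tendsto (fun k : ℕ => (⨅ K, ∫ ω, G K ω ∂P) + 1 / ((k : ℝ) + 1)) atTop
        (nhds ((⨅ K, ∫ ω, G K ω ∂P) + 0)) :=
      tendsto_const_nhds.add tendsto_one_div_add_atTop_nhds_zero_nat
    rw [add_zero] at ht
    exact ge_of_tendsto' ht fun k =>
      (integral_mono (hGi K) (hGi (Ks k)) (hKle k)).trans (hKs k).le
  refine ⟨G K, hGm K, EventuallyLE.antisymm ?_ ?_⟩
  · have h1 : ∀ᵐ ω ∂P, ∀ n, g ω ≤ (K n).1 ω := ae_all_iff.2 fun n => hg.1 _ (K n).2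
    filter_upwards [h1, hg.1 _ hCS] with ω h1 h2
    exact le_ciInf fun n => le_max_of_le_right (le_min h2 (h1 n))
  · refine hg.2 _ fun L hL => ?_
    let K' : ℕ → S := fun n => Nat.casesOn n ⟨L, hL⟩ K
    have hle : ∀ ω, G K' ω ≤ G K ω := fun ω => le_ciInf fun j =>
      ciInf_le (hbdd K' ω) (j + 1)
    have hint : ∫ ω, G K' ω ∂P = ∫ ω, G K ω ∂P :=
      le_antisymm (integral_mono (hGi K') (hGi K) hle) (hKc.trans (ciInf_le hBJ K'))
    have hae := (integral_eq_iff_of_ae_le (hGi K') (hGi K) (Eventually.of_forall hle)).1 hint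
    filter_upwards [hae, hlow L hL] with ω h1 h2
    rw [← h1]
    exact (ciInf_le (hbdd K' ω) 0).trans (max_le h2 (min_le_right _ _))

/-- Proposition 2.7: the indifference premium `H_t` maps `L^∞_T` into
`L^∞_t`, vanishes at `0`, is monotone, convex, carries a risk loading and is
translation invariant. -/
theorem indifference_premium_properties
    {m0 : MeasurableSpace Ω} (P : Measure Ω) [IsProbabilityMeasure P]
    (ℱ : Filtration ℕ m0) (T n t : ℕ) (hT : 0 < T) (hn : 0 < n) (ht : t ≤ T)
    (u u' : ℕ → ℕ → ℝ → ℝ) (hu : ∀ i s, IsUtility (u i s) (u' i s))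
    (U : (Ω → ℝ) → Ω → ℝ)
    (hU : ∀ Z : Ω → ℝ, MeasBdd (ℱ T) Z →
      IsEssSupOf P
        {g | ∃ X : ℕ → ℕ → Ω → ℝ, IsDiv P ℱ n t T Z X ∧ g = utilSum P ℱ u n t T X}
        (U Z))
    (H : (Ω → ℝ) → Ω → ℝ)
    -- `H Z` is the essential infimum of all `K ∈ L^∞_t` with `U_t(K - Z) ≥ U_t(0)` a.s.:
    (hH : ∀ Z : Ω → ℝ, MeasBdd (ℱ T) Z →
      IsEssInfOf P
        {K | MeasBdd (ℱ t) K ∧ U (fun _ => 0) ≤ᵐ[P] U (fun ω => K ω - Z ω)}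
        (H Z)) :
    -- `H` maps `L^∞_T` into `L^∞_t`:
    (∀ Z : Ω → ℝ, MeasBdd (ℱ T) Z → ∃ V : Ω → ℝ, MeasBdd (ℱ t) V ∧ H Z =ᵐ[P] V) ∧
    -- `H_t(0) = 0` a.s.:
    (H (fun _ => 0) =ᵐ[P] fun _ => 0) ∧
    -- monotonicity:
    (∀ X Y : Ω → ℝ, MeasBdd (ℱ T) X → MeasBdd (ℱ T) Y → Y ≤ᵐ[P] X →
      H Y ≤ᵐ[P] H X) ∧
    -- convexity:
    (∀ X Y : Ω → ℝ, ∀ a : ℝ, MeasBdd (ℱ T) X → MeasBdd (ℱ T) Y → 0 < a → a < 1 →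
      H (fun ω => a * X ω + (1 - a) * Y ω) ≤ᵐ[P]
        fun ω => a * H X ω + (1 - a) * H Y ω) ∧
    -- risk loading:
    (∀ Z : Ω → ℝ, MeasBdd (ℱ T) Z → (P[Z | ℱ t]) ≤ᵐ[P] H Z) ∧
    -- translation invariance:
    (∀ Z C : Ω → ℝ, MeasBdd (ℱ T) Z → MeasBdd (ℱ t) C →
      H (fun ω => Z ω + C ω) =ᵐ[P] fun ω => H Z ω + C ω) := by
  have hFT : ∀ s, ℱ s ≤ m0 := fun s => ℱ.le s
  have h0 : MeasBdd (ℱ T) (fun _ : Ω => (0 : ℝ)) := ipp_const _ 0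
  -- upper bound on U
  have hUle : ∀ Z : Ω → ℝ, MeasBdd (ℱ T) Z → U Z ≤ᵐ[P] P[Z | ℱ t] := by
    intro Z hZ
    refine (hU Z hZ).2 _ ?_
    rintro _ ⟨X, ⟨hX, hXs⟩, rfl⟩
    have hXi : ∀ i ∈ Finset.Icc 1 n, ∀ s ∈ Finset.Icc t T, Integrable (X i s) P :=
      fun i hi s hs => ipp_int P (hFT s) (hX i hi s hs)
    have e1 := ipp_sum_le P (Finset.Icc 1 n) (Finset.Icc t T)
      (fun i s => P[fun ω' => u i s (X i s ω') | ℱ t]) (fun i s => P[X i s | ℱ t])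
      (fun i hi s hs => condExp_mono (ipp_int P (hFT s) (ipp_comp (hu i s) (hX i hi s hs)))
        (hXi i hi s hs) (Eventually.of_forall fun ω => ipp_ule (hu i s) _))
    have e2 : ∀ᵐ ω ∂P, ∀ i ∈ ((Finset.Icc 1 n : Finset ℕ) : Set ℕ),
        (P[∑ s ∈ Finset.Icc t T, X i s | ℱ t]) ω
          = (∑ s ∈ Finset.Icc t T, P[X i s | ℱ t]) ω :=
      (ae_ball_iff (Finset.countable_toSet _)).2 fun i hi =>
        condExp_finsetSum (fun s hs => hXi i hi s hs) (ℱ t)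
    have e3 := condExp_finsetSum (μ := P) (s := Finset.Icc 1 n)
      (f := fun i => ∑ s ∈ Finset.Icc t T, X i s)
      (fun i hi => integrable_finsetSum' _ fun s hs => hXi i hi s hs) (ℱ t)
    have e4 : P[∑ i ∈ Finset.Icc 1 n, ∑ s ∈ Finset.Icc t T, X i s | ℱ t]
        =ᵐ[P] P[Z | ℱ t] := condExp_congr_ae (by
      filter_upwards [hXs] with ω hω
      simpa [Finset.sum_apply] using hω)
    filter_upwards [e1, e2, e3, e4] with ω h1 h2 h3 h4
    rw [← h4, h3, Finset.sum_apply, Finset.sum_congr rfl h2]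
    simpa [utilSum, Finset.sum_apply] using h1
  have hU0 : (fun _ => 0) ≤ᵐ[P] U (fun _ => 0) := by
    have := (hU _ h0).1 _ ⟨fun _ _ _ => 0, ⟨fun i _ s _ => ipp_const _ 0, by simp⟩, rfl⟩
    have e : utilSum P ℱ u n t T (fun _ _ _ => 0) = fun _ => 0 := by
      funext ω
      simp only [utilSum]
      refine Finset.sum_eq_zero fun i _ => Finset.sum_eq_zero fun s _ => ?_
      rw [(hu i s).zero, condExp_const (hFT t)]
    rwa [e] at this
  -- monotonicity of U
  have hUmono : ∀ W W' : Ω → ℝ, MeasBdd (ℱ T) W → MeasBdd (ℱ T) W' → W ≤ᵐ[P] W' →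
      U W ≤ᵐ[P] U W' := by
    intro W W' hW hW' hle
    refine (hU W hW).2 _ ?_
    rintro _ ⟨X, ⟨hX, hXs⟩, rfl⟩
    let D : ℕ → ℕ → Ω → ℝ := fun i s ω => if i = 1 ∧ s = T then W' ω - W ω else 0
    have hD : ∀ i s, MeasBdd (ℱ s) (D i s) := by
      intro i s
      by_cases h : i = 1 ∧ s = T
      · obtain ⟨rfl, rfl⟩ := h
        simpa [D] using hW'.ipp_sub hW
      · simpa [D, h] using ipp_const (ℱ s) 0
    have hD0 : ∀ᵐ ω ∂P, ∀ i s, 0 ≤ D i s ω := by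
      filter_upwards [hle] with ω hω i s
      by_cases h : i = 1 ∧ s = T
      · simpa [D, h] using hω
      · simp [D, h]
    have hDs : ∀ ω, ∑ i ∈ Finset.Icc 1 n, ∑ s ∈ Finset.Icc t T, D i s ω = W' ω - W ω := by
      intro ω
      rw [Finset.sum_eq_single_of_mem 1 (Finset.mem_Icc.2 ⟨le_rfl, hn⟩),
        Finset.sum_eq_single_of_mem T (Finset.mem_Icc.2 ⟨ht, le_rfl⟩)]
      · simp [D]
      · intro s _ hs
        simp [D, hs]
      · intro i _ hi
        simp [D, hi]
    have hY : ∀ i ∈ Finset.Icc 1 n, ∀ s ∈ Finset.Icc t T,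
        MeasBdd (ℱ s) (fun ω => X i s ω + D i s ω) :=
      fun i hi s hs => (hX i hi s hs).ipp_add (hD i s)
    have key := (hU W' hW').1 _ ⟨fun i s ω => X i s ω + D i s ω, ⟨hY, by
      filter_upwards [hXs] with ω hω
      simp only [Finset.sum_add_distrib]
      rw [hω, hDs]
      ring⟩, rfl⟩
    refine EventuallyLE.trans ?_ key
    exact ipp_sum_le P (Finset.Icc 1 n) (Finset.Icc t T)
      (fun i s => P[fun ω' => u i s (X i s ω') | ℱ t])
      (fun i s => P[fun ω' => u i s (X i s ω' + D i s ω') | ℱ t])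
      (fun i hi s hs => condExp_mono (ipp_int P (hFT s) (ipp_comp (hu i s) (hX i hi s hs)))
        (ipp_int P (hFT s) (ipp_comp (hu i s) (hY i hi s hs))) (by
          filter_upwards [hD0] with ω hω
          have := hω i s
          exact (hu i s).strictMono.monotone (by linarith)))
  -- concavity of U
  have hUconc : ∀ (X Y : Ω → ℝ) (a : ℝ), MeasBdd (ℱ T) X → MeasBdd (ℱ T) Y → 0 < a → a < 1 →
      ∀ᵐ ω ∂P, a * U X ω + (1 - a) * U Y ω ≤ U (fun ω => a * X ω + (1 - a) * Y ω) ω := by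
    intro X Y a hX hY ha ha1
    have hW := (hX.ipp_smul a).ipp_add (hY.ipp_smul (1 - a))
    have base : ∀ A B, IsDiv P ℱ n t T X A → IsDiv P ℱ n t T Y B → ∀ᵐ ω ∂P,
        a * utilSum P ℱ u n t T A ω + (1 - a) * utilSum P ℱ u n t T B ω
          ≤ U (fun ω => a * X ω + (1 - a) * Y ω) ω := by
      rintro A B ⟨hA, hAs⟩ ⟨hB, hBs⟩
      have hY : ∀ i ∈ Finset.Icc 1 n, ∀ s ∈ Finset.Icc t T,
          MeasBdd (ℱ s) (fun ω => a * A i s ω + (1 - a) * B i s ω) :=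
        fun i hi s hs => ((hA i hi s hs).ipp_smul a).ipp_add ((hB i hi s hs).ipp_smul (1 - a))
      have key := (hU _ hW).1 _ ⟨fun i s ω => a * A i s ω + (1 - a) * B i s ω, ⟨hY, by
        filter_upwards [hAs, hBs] with ω hω hω'
        simp only [Finset.sum_add_distrib, ← Finset.mul_sum]
        rw [hω, hω']⟩, rfl⟩
      have e1 := ipp_sum_le P (Finset.Icc 1 n) (Finset.Icc t T)
        (fun i s ω => a * (P[fun ω' => u i s (A i s ω') | ℱ t]) ω
          + (1 - a) * (P[fun ω' => u i s (B i s ω') | ℱ t]) ω)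
        (fun i s => P[fun ω' => u i s (a * A i s ω' + (1 - a) * B i s ω') | ℱ t])
        (fun i hi s hs => by
          have iA := ipp_int P (hFT s) (ipp_comp (hu i s) (hA i hi s hs))
          have iB := ipp_int P (hFT s) (ipp_comp (hu i s) (hB i hi s hs))
          have iW := ipp_int P (hFT s) (ipp_comp (hu i s) (hY i hi s hs))
          have c1 := condExp_smul (μ := P) a (fun ω' => u i s (A i s ω')) (ℱ t)
          have c2 := condExp_smul (μ := P) (1 - a) (fun ω' => u i s (B i s ω')) (ℱ t)
          have c3 := condExp_add (iA.smul a) (iB.smul (1 - a)) (ℱ t)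
          have c4 : P[a • (fun ω' => u i s (A i s ω')) + (1 - a) • (fun ω' => u i s (B i s ω'))
              | ℱ t] ≤ᵐ[P] P[fun ω' => u i s (a * A i s ω' + (1 - a) * B i s ω') | ℱ t] :=
            condExp_mono ((iA.smul a).add (iB.smul (1 - a))) iW (Eventually.of_forall fun ω => by
              have := (hu i s).strictConcave.concaveOn.2 (Set.mem_univ (A i s ω))
                (Set.mem_univ (B i s ω)) ha.le (by linarith : (0 : ℝ) ≤ 1 - a) (by ring)
              simpa using this)
          filter_upwards [c1, c2, c3, c4] with ω h1 h2 h3 h4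
          rw [h3, Pi.add_apply, h1, h2] at h4
          simpa using h4)
      filter_upwards [key, e1] with ω h1 h2
      refine le_trans ?_ h1
      simp only [Finset.sum_add_distrib, ← Finset.mul_sum] at h2
      simpa [utilSum] using h2
    have step : ∀ B, IsDiv P ℱ n t T Y B → ∀ᵐ ω ∂P,
        a * U X ω + (1 - a) * utilSum P ℱ u n t T B ω
          ≤ U (fun ω => a * X ω + (1 - a) * Y ω) ω := by
      intro B hB
      have := (hU X hX).2 (fun ω => (U (fun ω => a * X ω + (1 - a) * Y ω) ω
          - (1 - a) * utilSum P ℱ u n t T B ω) / a) (by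
        rintro _ ⟨A, hA, rfl⟩
        filter_upwards [base A B hA hB] with ω h
        rw [le_div_iff₀ ha]
        linarith)
      filter_upwards [this] with ω h
      rw [le_div_iff₀ ha] at h
      linarith
    have h1a : 0 < 1 - a := by linarith
    have := (hU Y hY).2 (fun ω => (U (fun ω => a * X ω + (1 - a) * Y ω) ω
        - a * U X ω) / (1 - a)) (by
      rintro _ ⟨B, hB, rfl⟩
      filter_upwards [step B hB] with ω h
      rw [le_div_iff₀ h1a]
      linarith)
    filter_upwards [this] with ω h
    rw [le_div_iff₀ h1a] at h
    linarith
  -- risk loading, elementwise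
  have hrl : ∀ Z : Ω → ℝ, MeasBdd (ℱ T) Z → ∀ K, MeasBdd (ℱ t) K →
      U (fun _ => 0) ≤ᵐ[P] U (fun ω => K ω - Z ω) → P[Z | ℱ t] ≤ᵐ[P] K := by
    intro Z hZ K hK hKU
    have h1 := hUle _ ((hK.ipp_mono (ℱ.mono ht)).ipp_sub hZ)
    have h2 := condExp_sub (ipp_int P (hFT t) hK) (ipp_int P (hFT T) hZ) (ℱ t)
    have h3 : P[K | ℱ t] = K :=
      condExp_of_stronglyMeasurable (hFT t) hK.1.stronglyMeasurable (ipp_int P (hFT t) hK)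
    filter_upwards [hU0, hKU, h1, h2] with ω a1 a2 a3 a4
    rw [h3] at a4
    have a5 : (P[fun ω => K ω - Z ω | ℱ t]) ω = K ω - (P[Z | ℱ t]) ω := a4
    linarith
  have hload : ∀ Z : Ω → ℝ, MeasBdd (ℱ T) Z → (P[Z | ℱ t]) ≤ᵐ[P] H Z := fun Z hZ =>
    (hH Z hZ).2 _ fun K hK => hrl Z hZ K hK.1 hK.2
  have htrans : ∀ Z C : Ω → ℝ, MeasBdd (ℱ T) Z → MeasBdd (ℱ t) C →
      (fun ω => H Z ω + C ω) ≤ᵐ[P] H (fun ω => Z ω + C ω) := by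
    intro Z C hZ hC
    refine (hH _ (hZ.ipp_add (hC.ipp_mono (ℱ.mono ht)))).2 _ ?_
    rintro K ⟨hK, hKU⟩
    have := (hH Z hZ).1 (fun ω => K ω - C ω) ⟨hK.ipp_sub hC, by
      have e : (fun ω => K ω - C ω - Z ω) = fun ω => K ω - (Z ω + C ω) := by
        funext ω; ring
      rw [e]
      exact hKU⟩
    filter_upwards [this] with ω h
    linarith
  refine ⟨?_, ?_, ?_, ?_, hload, ?_⟩
  · intro Z hZ
    obtain ⟨C, hC⟩ := hZ.2
    refine ipp_essInf_meas P (hFT t) _ (fun K hK => hK.1.1) |C| (abs_nonneg C) ?_ ?_ _ (hH Z hZ)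
    · refine ⟨ipp_const _ _, hUmono _ _ h0 ((ipp_const _ _).ipp_sub hZ) ?_⟩
      exact Eventually.of_forall fun ω => by
        have := (abs_le.1 (hC ω)).2
        have := le_abs_self C
        show 0 ≤ |C| - Z ω
        linarith
    · intro K hK
      refine EventuallyLE.trans ?_ (hrl Z hZ K hK.1 hK.2)
      have := condExp_mono (μ := P) (m := ℱ t) (integrable_const (-|C|)) (ipp_int P (hFT T) hZ)
        (Eventually.of_forall fun ω => by
          have := (abs_le.1 (hC ω)).1
          have := le_abs_self C
          show -|C| ≤ Z ω
          linarith)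
      rwa [condExp_const (hFT t)] at this
  · refine EventuallyLE.antisymm ?_ ?_
    · exact (hH _ h0).1 _ ⟨ipp_const _ 0, by simp only [sub_zero]; exact EventuallyLE.refl _ _⟩
    · have := hload _ h0
      rwa [condExp_const (hFT t)] at this
  · intro X Y hX hY hle
    refine (hH X hX).2 _ ?_
    rintro K ⟨hK, hKU⟩
    refine (hH Y hY).1 _ ⟨hK, hKU.trans ?_⟩
    have hK' := hK.ipp_mono (ℱ.mono ht)
    refine hUmono _ _ (hK'.ipp_sub hX) (hK'.ipp_sub hY) ?_
    filter_upwards [hle] with ω h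
    linarith
  · intro X Y a hX hY ha ha1
    have h1a : 0 < 1 - a := by linarith
    have base : ∀ K L, MeasBdd (ℱ t) K → U (fun _ => 0) ≤ᵐ[P] U (fun ω => K ω - X ω) →
        MeasBdd (ℱ t) L → U (fun _ => 0) ≤ᵐ[P] U (fun ω => L ω - Y ω) →
        ∀ᵐ ω ∂P, H (fun ω => a * X ω + (1 - a) * Y ω) ω ≤ a * K ω + (1 - a) * L ω := by
      intro K L hK hKU hL hLU
      refine (hH _ ((hX.ipp_smul a).ipp_add (hY.ipp_smul (1 - a)))).1
        (fun ω => a * K ω + (1 - a) * L ω)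
        ⟨(hK.ipp_smul a).ipp_add (hL.ipp_smul (1 - a)), ?_⟩
      have hc := hUconc _ _ a ((hK.ipp_mono (ℱ.mono ht)).ipp_sub hX)
        ((hL.ipp_mono (ℱ.mono ht)).ipp_sub hY) ha ha1
      have e : (fun ω => a * K ω + (1 - a) * L ω - (a * X ω + (1 - a) * Y ω))
          = fun ω => a * (K ω - X ω) + (1 - a) * (L ω - Y ω) := by
        funext ω; ring
      rw [e]
      filter_upwards [hc, hKU, hLU] with ω h1 h2 h3
      have := mul_le_mul_of_nonneg_left h2 ha.le
      have := mul_le_mul_of_nonneg_left h3 h1a.le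
      linarith
    have step : ∀ L, MeasBdd (ℱ t) L → U (fun _ => 0) ≤ᵐ[P] U (fun ω => L ω - Y ω) →
        ∀ᵐ ω ∂P, H (fun ω => a * X ω + (1 - a) * Y ω) ω ≤ a * H X ω + (1 - a) * L ω := by
      intro L hL hLU
      have := (hH X hX).2 (fun ω => (H (fun ω => a * X ω + (1 - a) * Y ω) ω
          - (1 - a) * L ω) / a) (by
        rintro K ⟨hK, hKU⟩
        filter_upwards [base K L hK hKU hL hLU] with ω h
        rw [div_le_iff₀ ha]
        linarith)
      filter_upwards [this] with ω h
      rw [div_le_iff₀ ha] at h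
      linarith
    have := (hH Y hY).2 (fun ω => (H (fun ω => a * X ω + (1 - a) * Y ω) ω
        - a * H X ω) / (1 - a)) (by
      rintro L ⟨hL, hLU⟩
      filter_upwards [step L hL hLU] with ω h
      rw [div_le_iff₀ h1a]
      linarith)
    filter_upwards [this] with ω h
    rw [div_le_iff₀ h1a] at h
    linarith
  · intro Z C hZ hC
    refine EventuallyLE.antisymm ?_ (htrans Z C hZ hC)
    have := htrans _ _ (hZ.ipp_add (hC.ipp_mono (ℱ.mono ht))) (hC.ipp_smul (-1))
    have e : (fun ω => Z ω + C ω + -1 * C ω) = Z := by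
      funext ω; ring
    rw [e] at this
    filter_upwards [this] with ω h
    linarith
end

section
/- Let Z ∈ L^∞_T and (X_{i,s}) ∈ 𝓐_{n,t}(Z). Then (X_{i,s}) attains the essential supremum defining U_t(Z) if and only if the process (u_{i,s}'(X_{i,s}))_{s=t,…,T} does not depend on i ∈ {1,…,n} (i.e. u_{i,s}'(X_{i,s}) = u_{1,s}'(X_{1,s}) a.s. for all i and s) and (u_{1,s}'(X_{1,s}))_{s=t,…,T} is a martingale with respect to (𝓕_s). -/
open MeasureTheory Filter

variable {Ω : Type*}

theorem IsUtility.tangent {u u' : ℝ → ℝ} (h : IsUtility u u') (x y : ℝ) :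
    u y ≤ u x + u' x * (y - x) := by
  rcases lt_trichotomy x y with hxy | hxy | hxy
  · have := h.strictConcave.concaveOn.slope_le_of_hasDerivAt (Set.mem_univ x) (Set.mem_univ y)
      hxy (h.hasDeriv x)
    rw [slope_def_field, div_le_iff₀ (by linarith)] at this
    linarith
  · subst hxy; simp
  · have := h.strictConcave.concaveOn.le_slope_of_hasDerivAt (Set.mem_univ y) (Set.mem_univ x)
      hxy (h.hasDeriv x)
    rw [slope_def_field, le_div_iff₀ (by linarith)] at this
    linarith

theorem IsUtility.cont {u u' : ℝ → ℝ} (h : IsUtility u u') : Continuous u :=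
  continuous_iff_continuousAt.2 fun x => (h.hasDeriv x).continuousAt

theorem bdd_on_ball {f : ℝ → ℝ} (hf : Continuous f) (C : ℝ) :
    ∃ B, ∀ x, |x| ≤ C → |f x| ≤ B := by
  obtain ⟨B, hB⟩ := (isCompact_Icc (a := -C) (b := C)).exists_bound_of_continuousOn hf.continuousOn
  exact ⟨B, fun x hx => hB x (abs_le.1 hx)⟩

theorem MeasBdd.comp {m : MeasurableSpace Ω} {X : Ω → ℝ} (h : MeasBdd m X) {f : ℝ → ℝ}
    (hf : Continuous f) : MeasBdd m (fun ω => f (X ω)) := by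
  obtain ⟨hm, C, hC⟩ := h
  obtain ⟨B, hB⟩ := bdd_on_ball hf C
  exact ⟨hf.measurable.comp hm, B, fun ω => hB _ (hC ω)⟩

theorem MeasBdd.mul {m : MeasurableSpace Ω} {X Y : Ω → ℝ} (h : MeasBdd m X) (h' : MeasBdd m Y) :
    MeasBdd m (fun ω => X ω * Y ω) := by
  obtain ⟨hm, C, hC⟩ := h
  obtain ⟨hm', C', hC'⟩ := h'
  refine ⟨hm.mul hm', C * C', fun ω => ?_⟩
  rw [abs_mul]
  exact mul_le_mul (hC ω) (hC' ω) (abs_nonneg _) ((abs_nonneg _).trans (hC ω))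

theorem MeasBdd.add {m : MeasurableSpace Ω} {X Y : Ω → ℝ} (h : MeasBdd m X) (h' : MeasBdd m Y) :
    MeasBdd m (fun ω => X ω + Y ω) := by
  obtain ⟨hm, C, hC⟩ := h
  obtain ⟨hm', C', hC'⟩ := h'
  exact ⟨hm.add hm', C + C', fun ω => (abs_add_le _ _).trans (add_le_add (hC ω) (hC' ω))⟩

theorem MeasBdd.const_mul {m : MeasurableSpace Ω} {X : Ω → ℝ} (h : MeasBdd m X) (c : ℝ) :
    MeasBdd m (fun ω => c * X ω) :=
  h.comp (f := fun x => c * x) (by fun_prop)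

theorem MeasBdd.mono {m m' : MeasurableSpace Ω} {X : Ω → ℝ} (h : MeasBdd m X) (hle : m ≤ m') :
    MeasBdd m' X := ⟨h.1.mono hle le_rfl, h.2⟩

theorem MeasBdd.integrable {m0 : MeasurableSpace Ω} {P : Measure Ω} [IsProbabilityMeasure P]
    {X : Ω → ℝ} (h : MeasBdd m0 X) : Integrable X P := by
  obtain ⟨hm, C, hC⟩ := h
  exact Integrable.of_bound hm.aestronglyMeasurable C (ae_of_all _ hC)

theorem integral_utilSum {m0 : MeasurableSpace Ω} (P : Measure Ω) [IsProbabilityMeasure P]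
    (ℱ : Filtration ℕ m0) (u : ℕ → ℕ → ℝ → ℝ) (n t T : ℕ) (X : ℕ → ℕ → Ω → ℝ) :
    ∫ ω, utilSum P ℱ u n t T X ω ∂P
      = ∑ i ∈ Finset.Icc 1 n, ∑ s ∈ Finset.Icc t T, ∫ ω, u i s (X i s ω) ∂P := by
  unfold utilSum
  rw [integral_finsetSum _ fun i _ => integrable_finsetSum _ fun s _ => integrable_condExp]
  refine Finset.sum_congr rfl fun i _ => ?_
  rw [integral_finsetSum _ fun s _ => integrable_condExp]
  exact Finset.sum_congr rfl fun s _ => integral_condExp (ℱ.le t)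

theorem utilSum_integrable {m0 : MeasurableSpace Ω} (P : Measure Ω) [IsProbabilityMeasure P]
    (ℱ : Filtration ℕ m0) (u : ℕ → ℕ → ℝ → ℝ) (n t T : ℕ) (X : ℕ → ℕ → Ω → ℝ) :
    Integrable (utilSum P ℱ u n t T X) P :=
  integrable_finsetSum _ fun _ _ => integrable_finsetSum _ fun _ _ => integrable_condExp

theorem tendsto_perturb {m0 : MeasurableSpace Ω} (P : Measure Ω) [IsProbabilityMeasure P]
    {f : ℝ → ℝ} (hf : Continuous f) {X D : Ω → ℝ} (hX : MeasBdd m0 X) (hD : MeasBdd m0 D) :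
    Tendsto (fun k : ℕ => ∫ ω, f (X ω + (1 / ((k : ℝ) + 1)) * D ω) * D ω ∂P) atTop
      (nhds (∫ ω, f (X ω) * D ω ∂P)) := by
  obtain ⟨C, hC⟩ := hX.2
  obtain ⟨C', hC'⟩ := hD.2
  obtain ⟨B, hB⟩ := bdd_on_ball hf (C + C')
  refine tendsto_integral_of_dominated_convergence (fun _ => B * C') (fun k => ?_)
    (integrable_const _) (fun k => ae_of_all _ fun ω => ?_) (ae_of_all _ fun ω => ?_)
  · exact (((hX.add (hD.const_mul _)).comp hf).mul hD).1.aestronglyMeasurable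
  · have h1 : |X ω + (1 / ((k : ℝ) + 1)) * D ω| ≤ C + C' := by
      refine (abs_add_le _ _).trans (add_le_add (hC ω) ?_)
      rw [abs_mul, abs_of_nonneg (by positivity)]
      have h2 : 1 / ((k : ℝ) + 1) ≤ 1 := by
        rw [div_le_one (by positivity)]; linarith [(Nat.cast_nonneg k : (0 : ℝ) ≤ k)]
      calc _ ≤ 1 * |D ω| := mul_le_mul_of_nonneg_right h2 (abs_nonneg _)
        _ ≤ C' := by rw [one_mul]; exact hC' ω
    rw [Real.norm_eq_abs, abs_mul]
    exact mul_le_mul (hB _ h1) (hC' ω) (abs_nonneg _) ((abs_nonneg _).trans (hB _ h1))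
  · have h1 : Tendsto (fun k : ℕ => X ω + (1 / ((k : ℝ) + 1)) * D ω) atTop
        (nhds (X ω + 0 * D ω)) :=
      tendsto_const_nhds.add (tendsto_one_div_add_atTop_nhds_zero_nat.mul_const _)
    rw [zero_mul, add_zero] at h1
    exact ((hf.tendsto _).comp h1).mul_const _

/-- First-order condition at a maximizer. -/
theorem first_order {m0 : MeasurableSpace Ω} (P : Measure Ω) [IsProbabilityMeasure P]
    (ℱ : Filtration ℕ m0) (T n t : ℕ)
    (u u' : ℕ → ℕ → ℝ → ℝ) (hu : ∀ i s, IsUtility (u i s) (u' i s))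
    (Z : Ω → ℝ) (X : ℕ → ℕ → Ω → ℝ) (hX : IsDiv P ℱ n t T Z X)
    (hmax : ∀ Y : ℕ → ℕ → Ω → ℝ, IsDiv P ℱ n t T Z Y →
      utilSum P ℱ u n t T Y ≤ᵐ[P] utilSum P ℱ u n t T X)
    (D : ℕ → ℕ → Ω → ℝ)
    (hD : ∀ i ∈ Finset.Icc 1 n, ∀ s ∈ Finset.Icc t T, MeasBdd (ℱ s) (D i s))
    (hD0 : ∀ ω, (∑ i ∈ Finset.Icc 1 n, ∑ s ∈ Finset.Icc t T, D i s ω) = 0) :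
    ∑ i ∈ Finset.Icc 1 n, ∑ s ∈ Finset.Icc t T, ∫ ω, u' i s (X i s ω) * D i s ω ∂P ≤ 0 := by
  have hlim : Tendsto (fun k : ℕ => ∑ i ∈ Finset.Icc 1 n, ∑ s ∈ Finset.Icc t T,
      ∫ ω, u' i s (X i s ω + (1 / ((k : ℝ) + 1)) * D i s ω) * D i s ω ∂P) atTop
      (nhds (∑ i ∈ Finset.Icc 1 n, ∑ s ∈ Finset.Icc t T,
        ∫ ω, u' i s (X i s ω) * D i s ω ∂P)) :=
    tendsto_finset_sum _ fun i hi => tendsto_finset_sum _ fun s hs =>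
      tendsto_perturb P (hu i s).derivCont ((hX.1 i hi s hs).mono (ℱ.le s))
        ((hD i hi s hs).mono (ℱ.le s))
  refine le_of_tendsto' hlim fun k => ?_
  set e : ℝ := 1 / ((k : ℝ) + 1) with he
  have hepos : 0 < e := by positivity
  let Y : ℕ → ℕ → Ω → ℝ := fun i s ω => X i s ω + e * D i s ω
  have hYm : ∀ i ∈ Finset.Icc 1 n, ∀ s ∈ Finset.Icc t T, MeasBdd (ℱ s) (Y i s) :=
    fun i hi s hs => (hX.1 i hi s hs).add ((hD i hi s hs).const_mul e)
  have hY : IsDiv P ℱ n t T Z Y := by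
    refine ⟨hYm, ?_⟩
    filter_upwards [hX.2] with ω hω
    simp only [Y, Finset.sum_add_distrib, ← Finset.mul_sum, hD0 ω, hω]
    simp
  have h1 := integral_mono_ae (utilSum_integrable P ℱ u n t T Y)
    (utilSum_integrable P ℱ u n t T X) (hmax Y hY)
  rw [integral_utilSum, integral_utilSum] at h1
  have h2 : ∑ i ∈ Finset.Icc 1 n, ∑ s ∈ Finset.Icc t T, ∫ ω, u i s (X i s ω) ∂P
      ≤ ∑ i ∈ Finset.Icc 1 n, ∑ s ∈ Finset.Icc t T, (∫ ω, u i s (Y i s ω) ∂P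
        - e * ∫ ω, u' i s (Y i s ω) * D i s ω ∂P) := by
    refine Finset.sum_le_sum fun i hi => Finset.sum_le_sum fun s hs => ?_
    have iX : Integrable (fun ω => u i s (X i s ω)) P :=
      (((hX.1 i hi s hs).comp (hu i s).cont).mono (ℱ.le s)).integrable
    have iY : Integrable (fun ω => u i s (Y i s ω)) P :=
      (((hYm i hi s hs).comp (hu i s).cont).mono (ℱ.le s)).integrable
    have iD : Integrable (fun ω => u' i s (Y i s ω) * D i s ω) P :=
      ((((hYm i hi s hs).comp (hu i s).derivCont).mul (hD i hi s hs)).mono (ℱ.le s)).integrable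
    rw [← integral_const_mul, ← integral_sub iY (iD.const_mul e)]
    refine integral_mono iX (iY.sub (iD.const_mul e)) fun ω => ?_
    have := (hu i s).tangent (Y i s ω) (X i s ω)
    have h3 : X i s ω - Y i s ω = - (e * D i s ω) := by simp [Y]
    rw [h3] at this
    show u i s (X i s ω) ≤ u i s (Y i s ω) - e * (u' i s (Y i s ω) * D i s ω)
    linarith
  simp only [Finset.sum_sub_distrib, ← Finset.mul_sum] at h2
  have h4 : e * ∑ i ∈ Finset.Icc 1 n, ∑ s ∈ Finset.Icc t T,
      ∫ ω, u' i s (Y i s ω) * D i s ω ∂P ≤ 0 := by linarith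
  exact nonpos_of_mul_nonpos_right h4 hepos

/-- Consequence of the first-order condition for a two-point perturbation. -/
theorem marginal_le {m0 : MeasurableSpace Ω} (P : Measure Ω) [IsProbabilityMeasure P]
    (ℱ : Filtration ℕ m0) (T n t : ℕ)
    (u u' : ℕ → ℕ → ℝ → ℝ) (hu : ∀ i s, IsUtility (u i s) (u' i s))
    (Z : Ω → ℝ) (X : ℕ → ℕ → Ω → ℝ) (hX : IsDiv P ℱ n t T Z X)
    (hmax : ∀ Y : ℕ → ℕ → Ω → ℝ, IsDiv P ℱ n t T Z Y →
      utilSum P ℱ u n t T Y ≤ᵐ[P] utilSum P ℱ u n t T X)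
    (i j r s : ℕ) (hi : i ∈ Finset.Icc 1 n) (hj : j ∈ Finset.Icc 1 n)
    (hr : r ∈ Finset.Icc t T) (hs : s ∈ Finset.Icc t T) (hrs : r ≤ s)
    (H : Ω → ℝ) (hH : MeasBdd (ℱ r) H) :
    ∫ ω, u' i s (X i s ω) * H ω ∂P ≤ ∫ ω, u' j r (X j r ω) * H ω ∂P := by
  let c : ℕ → ℕ → ℝ := fun a b =>
    (if a = i then if b = s then 1 else 0 else 0) - (if a = j then if b = r then 1 else 0 else 0)
  have key : ∀ g : ℕ → ℕ → ℝ, ∑ a ∈ Finset.Icc 1 n, ∑ b ∈ Finset.Icc t T, c a b * g a b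
      = g i s - g j r := by
    intro g
    have e1 : ∀ p q : ℕ, p ∈ Finset.Icc 1 n → q ∈ Finset.Icc t T →
        ∑ a ∈ Finset.Icc 1 n, ∑ b ∈ Finset.Icc t T,
          (if a = p then if b = q then (1 : ℝ) else 0 else 0) * g a b = g p q := by
      intro p q hp hq
      rw [Finset.sum_eq_single_of_mem p hp, Finset.sum_eq_single_of_mem q hq]
      · simp
      · intro b _ hb; simp [hb]
      · intro a _ ha; simp [ha]
    simp only [c, sub_mul, Finset.sum_sub_distrib]
    rw [e1 i s hi hs, e1 j r hj hr]
  have h := first_order P ℱ T n t u u' hu Z X hX hmax (fun a b ω => c a b * H ω)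
    (fun a _ b _ => by
      by_cases hb : r ≤ b
      · exact (hH.mono (ℱ.mono hb)).const_mul _
      · have h1 : b ≠ s := by omega
        have h2 : b ≠ r := by omega
        have : c a b = 0 := by simp [c, h1, h2]
        simp only [this, zero_mul]
        exact ⟨measurable_const, 0, fun _ => by simp⟩)
    (fun ω => by rw [key fun _ _ => H ω, sub_self])
  have h3 := key fun a b => ∫ ω, u' a b (X a b ω) * H ω ∂P
  simp only [← integral_const_mul] at h3
  have h4 : ∀ a b, ∫ ω, c a b * (u' a b (X a b ω) * H ω) ∂P
      = ∫ ω, u' a b (X a b ω) * (c a b * H ω) ∂P := fun a b => by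
    congr 1; ext ω; ring
  simp only [h4] at h3
  rw [h3] at h
  linarith

theorem marginal_condExp {m0 : MeasurableSpace Ω} (P : Measure Ω) [IsProbabilityMeasure P]
    (ℱ : Filtration ℕ m0) (T n t : ℕ)
    (u u' : ℕ → ℕ → ℝ → ℝ) (hu : ∀ i s, IsUtility (u i s) (u' i s))
    (Z : Ω → ℝ) (X : ℕ → ℕ → Ω → ℝ) (hX : IsDiv P ℱ n t T Z X)
    (hmax : ∀ Y : ℕ → ℕ → Ω → ℝ, IsDiv P ℱ n t T Z Y →
      utilSum P ℱ u n t T Y ≤ᵐ[P] utilSum P ℱ u n t T X)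
    (i j r s : ℕ) (hi : i ∈ Finset.Icc 1 n) (hj : j ∈ Finset.Icc 1 n)
    (hr : r ∈ Finset.Icc t T) (hs : s ∈ Finset.Icc t T) (hrs : r ≤ s) :
    (P[fun ω => u' i s (X i s ω) | ℱ r]) =ᵐ[P] fun ω => u' j r (X j r ω) := by
  have m1 := (hX.1 i hi s hs).comp (hu i s).derivCont
  have m2 := (hX.1 j hj r hr).comp (hu j r).derivCont
  have i1 : Integrable (fun ω => u' i s (X i s ω)) P := (m1.mono (ℱ.le s)).integrable
  have i2 : Integrable (fun ω => u' j r (X j r ω)) P := (m2.mono (ℱ.le r)).integrable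
  refine (ae_eq_condExp_of_forall_setIntegral_eq (ℱ.le r) i1 (fun _ _ _ => i2.integrableOn)
    (fun A hA _ => ?_) m2.1.stronglyMeasurable.aestronglyMeasurable).symm
  have hH : MeasBdd (ℱ r) (A.indicator fun _ => (1 : ℝ)) := by
    refine ⟨measurable_const.indicator hA, 1, fun ω => ?_⟩
    by_cases h : ω ∈ A <;> simp [h]
  have e : ∀ f : Ω → ℝ, ∫ ω in A, f ω ∂P = ∫ ω, f ω * A.indicator (fun _ => (1 : ℝ)) ω ∂P := by
    intro f
    rw [← integral_indicator (ℱ.le r A hA)]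
    congr 1; ext ω
    by_cases h : ω ∈ A <;> simp [h]
  have a1 := marginal_le P ℱ T n t u u' hu Z X hX hmax i j r s hi hj hr hs hrs _ hH
  have a2 := marginal_le P ℱ T n t u u' hu Z X hX hmax i j r s hi hj hr hs hrs _ (hH.const_mul (-1))
  simp only [neg_one_mul, mul_neg, integral_neg] at a2
  rw [e, e]
  linarith

theorem martingale_maximizer {m0 : MeasurableSpace Ω} (P : Measure Ω) [IsProbabilityMeasure P]
    (ℱ : Filtration ℕ m0) (T n t : ℕ) (hn : 0 < n) (ht : t ≤ T)
    (u u' : ℕ → ℕ → ℝ → ℝ) (hu : ∀ i s, IsUtility (u i s) (u' i s))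
    (Z : Ω → ℝ) (X : ℕ → ℕ → Ω → ℝ) (hX : IsDiv P ℱ n t T Z X)
    (h1 : ∀ i ∈ Finset.Icc 1 n, ∀ s ∈ Finset.Icc t T,
        (fun ω => u' i s (X i s ω)) =ᵐ[P] fun ω => u' 1 s (X 1 s ω))
    (h2 : ∀ r ∈ Finset.Icc t T, ∀ s ∈ Finset.Icc t T, r ≤ s →
        (P[fun ω => u' 1 s (X 1 s ω) | ℱ r]) =ᵐ[P] fun ω => u' 1 r (X 1 r ω))
    (Y : ℕ → ℕ → Ω → ℝ) (hY : IsDiv P ℱ n t T Z Y) :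
    utilSum P ℱ u n t T Y ≤ᵐ[P] utilSum P ℱ u n t T X := by
  have h1n : 1 ∈ Finset.Icc 1 n := by simp; omega
  have hTT : T ∈ Finset.Icc t T := by simp; omega
  let D : ℕ × ℕ → Ω → ℝ := fun p ω => Y p.1 p.2 ω - X p.1 p.2 ω
  let M : Ω → ℝ := fun ω => u' 1 T (X 1 T ω)
  have hM : MeasBdd m0 M := ((hX.1 1 h1n T hTT).comp (hu 1 T).derivCont).mono (ℱ.le T)
  have hD : ∀ p ∈ Finset.Icc 1 n ×ˢ Finset.Icc t T, MeasBdd (ℱ p.2) (D p) := by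
    intro p hp
    rw [Finset.mem_product] at hp
    have := (hY.1 _ hp.1 _ hp.2).add ((hX.1 _ hp.1 _ hp.2).const_mul (-1))
    simpa [D, sub_eq_add_neg] using this
  have hDM : ∀ p ∈ Finset.Icc 1 n ×ˢ Finset.Icc t T, Integrable (D p * M) P := fun p hp =>
    (((hD p hp).mono (ℱ.le _)).mul hM).integrable
  have hterm : ∀ p ∈ Finset.Icc 1 n ×ˢ Finset.Icc t T,
      (P[fun ω => u p.1 p.2 (Y p.1 p.2 ω) | ℱ t]) ≤ᵐ[P]
        (P[fun ω => u p.1 p.2 (X p.1 p.2 ω) | ℱ t]) + P[D p * M | ℱ t] := by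
    intro p hp
    have hp' := Finset.mem_product.1 hp
    have hs := Finset.mem_Icc.1 hp'.2
    have mX := hX.1 _ hp'.1 _ hp'.2
    have mY := hY.1 _ hp'.1 _ hp'.2
    have iX : Integrable (fun ω => u p.1 p.2 (X p.1 p.2 ω)) P :=
      ((mX.comp (hu _ _).cont).mono (ℱ.le _)).integrable
    have iY : Integrable (fun ω => u p.1 p.2 (Y p.1 p.2 ω)) P :=
      ((mY.comp (hu _ _).cont).mono (ℱ.le _)).integrable
    have iD : Integrable (fun ω => u' p.1 p.2 (X p.1 p.2 ω) * D p ω) P :=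
      (((mX.comp (hu _ _).derivCont).mul (hD p hp)).mono (ℱ.le _)).integrable
    have a1 : (P[fun ω => u p.1 p.2 (Y p.1 p.2 ω) | ℱ t]) ≤ᵐ[P]
        P[(fun ω => u p.1 p.2 (X p.1 p.2 ω)) + (fun ω => u' p.1 p.2 (X p.1 p.2 ω) * D p ω) | ℱ t] :=
      condExp_mono iY (iX.add iD) (ae_of_all _ fun ω => (hu _ _).tangent _ _)
    have a2 := condExp_add iX iD (ℱ t)
    have a3 : P[D p * M | ℱ p.2] =ᵐ[P] D p * P[M | ℱ p.2] :=
      condExp_mul_of_stronglyMeasurable_left (hD p hp).1.stronglyMeasurable (hDM p hp) hM.integrable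
    have a4 : P[D p * M | ℱ p.2] =ᵐ[P] fun ω => u' p.1 p.2 (X p.1 p.2 ω) * D p ω := by
      filter_upwards [a3, h2 p.2 hp'.2 T hTT hs.2, h1 _ hp'.1 _ hp'.2] with ω b1 b2 b3
      rw [b1, Pi.mul_apply, b3, mul_comm, ← b2]
    have a5 := (condExp_congr_ae (m := ℱ t) a4).symm.trans
      (condExp_condExp_of_le (ℱ.mono hs.1) (ℱ.le p.2))
    filter_upwards [a1, a2, a5] with ω b1 b2 b3
    rw [b2, Pi.add_apply, b3] at b1
    exact b1
  have hzero : ∑ p ∈ Finset.Icc 1 n ×ˢ Finset.Icc t T, P[D p * M | ℱ t] =ᵐ[P] 0 := by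
    refine (condExp_finsetSum hDM (ℱ t)).symm.trans ?_
    have : (∑ p ∈ Finset.Icc 1 n ×ˢ Finset.Icc t T, D p * M) =ᵐ[P] 0 := by
      filter_upwards [hX.2, hY.2] with ω b1 b2
      rw [← Finset.sum_mul, Pi.mul_apply, Finset.sum_apply, Finset.sum_product]
      simp only [D, Finset.sum_sub_distrib, b1, b2]
      simp
    refine (condExp_congr_ae this).trans ?_
    rw [condExp_zero]
  have hall := (Finset.eventually_all _).2 hterm
  filter_upwards [hall, hzero] with ω b1 b2
  unfold utilSum
  rw [← Finset.sum_product', ← Finset.sum_product']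
  refine (Finset.sum_le_sum b1).trans ?_
  rw [Finset.sum_apply] at b2
  simp only [Pi.add_apply, Finset.sum_add_distrib, b2]
  simp

/-- Theorem 2.15: a diversification `(X_{i,s})` of `Z` attains the
essential supremum defining `U_t(Z)` iff the marginal utilities `u_{i,s}'(X_{i,s})` do not
depend on `i` and `(u_{1,s}'(X_{1,s}))_{s=t,…,T}` is a martingale. -/
theorem maximizer_iff_marginal_utility_martingale
    {m0 : MeasurableSpace Ω} (P : Measure Ω) [IsProbabilityMeasure P]
    (ℱ : Filtration ℕ m0) (T n t : ℕ) (hT : 0 < T) (hn : 0 < n) (ht : t ≤ T)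
    (u u' : ℕ → ℕ → ℝ → ℝ) (hu : ∀ i s, IsUtility (u i s) (u' i s))
    (Z : Ω → ℝ) (hZ : MeasBdd (ℱ T) Z)
    (X : ℕ → ℕ → Ω → ℝ) (hX : IsDiv P ℱ n t T Z X) :
    -- `X` attains the essential supremum defining `U_t(Z)` …
    (∀ Y : ℕ → ℕ → Ω → ℝ, IsDiv P ℱ n t T Z Y →
      utilSum P ℱ u n t T Y ≤ᵐ[P] utilSum P ℱ u n t T X)
    ↔
    -- … iff `u'_{i,s}(X_{i,s})` does not depend on `i` …
    ((∀ i ∈ Finset.Icc 1 n, ∀ s ∈ Finset.Icc t T,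
        (fun ω => u' i s (X i s ω)) =ᵐ[P] fun ω => u' 1 s (X 1 s ω)) ∧
      -- … and `(u'_{1,s}(X_{1,s}))_{s=t,…,T}` is a martingale w.r.t. `(ℱ s)`:
      (∀ r ∈ Finset.Icc t T, ∀ s ∈ Finset.Icc t T, r ≤ s →
        (P[fun ω => u' 1 s (X 1 s ω) | ℱ r]) =ᵐ[P] fun ω => u' 1 r (X 1 r ω))) := by
  have h1n : 1 ∈ Finset.Icc 1 n := by simp; omega
  constructor
  · intro hmax
    refine ⟨fun i hi s hs => ?_, fun r hr s hs hrs =>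
      marginal_condExp P ℱ T n t u u' hu Z X hX hmax 1 1 r s h1n h1n hr hs hrs⟩
    exact (marginal_condExp P ℱ T n t u u' hu Z X hX hmax 1 i s s h1n hi hs hs le_rfl).symm.trans
      (marginal_condExp P ℱ T n t u u' hu Z X hX hmax 1 1 s s h1n h1n hs hs le_rfl)
  · rintro ⟨h1, h2⟩ Y hY
    exact martingale_maximizer P ℱ T n t hn ht u u' hu Z X hX h1 h2 Y hY
end
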